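/- (Guard_NA for Needham–Schroeder–Lowe.) If evs ∈ nsl, A ∉ bad, B ∉ bad and Says A B (Crypt (pubK B) ⟨Nonce NA, Agent A⟩) ∈ set evs, then Guard NA {priK A, priK B} (spies evs), i.e. the nonce NA is guarded in all traffic by the private keys of A and B. -/

import Mathlib

inductive agent : Type
  | Server : agent
  | Friend : ℕ → agent
  | Spy : agent
deriving DecidableEq

inductive msg : Type
  | Agent : agent → msg
  | Number : ℕ → msg
  | Nonce : ℕ → msg
  | Key : ℕ → msg
  | Hash : msg → msg
  | MPair : msg → msg → msg
  | Crypt : ℕ → msg → msg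
deriving DecidableEq

inductive partsP (H : Set msg) : msg → Prop
  | Inj : ∀ X, X ∈ H → partsP H X
  | Fst : ∀ X Y, partsP H (msg.MPair X Y) → partsP H X
  | Snd : ∀ X Y, partsP H (msg.MPair X Y) → partsP H Y
  | Body : ∀ K X, partsP H (msg.Crypt K X) → partsP H X

/-- `parts H`: sub-components of messages of `H`. -/
def parts (H : Set msg) : Set msg := {X | partsP H X}

inductive analzP (invKey : ℕ → ℕ) (H : Set msg) : msg → Prop
  | Inj : ∀ X, X ∈ H → analzP invKey H X
  | Fst : ∀ X Y, analzP invKey H (msg.MPair X Y) → analzP invKey H X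
  | Snd : ∀ X Y, analzP invKey H (msg.MPair X Y) → analzP invKey H Y
  | Decrypt : ∀ K X, analzP invKey H (msg.Crypt K X) →
      analzP invKey H (msg.Key (invKey K)) → analzP invKey H X

/-- `analz invKey H`: what can be obtained by decomposing and decrypting messages of `H`. -/
def analz (invKey : ℕ → ℕ) (H : Set msg) : Set msg := {X | analzP invKey H X}

inductive synthP (H : Set msg) : msg → Prop
  | Inj : ∀ X, X ∈ H → synthP H X
  | Ag : ∀ a, synthP H (msg.Agent a)
  | Num : ∀ n, synthP H (msg.Number n)
  | Hsh : ∀ X, synthP H X → synthP H (msg.Hash X)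
  | Pr : ∀ X Y, synthP H X → synthP H Y → synthP H (msg.MPair X Y)
  | Cry : ∀ K X, synthP H X → msg.Key K ∈ H → synthP H (msg.Crypt K X)

/-- `synth H`: messages that can be synthesized from `H`. -/
def synth (H : Set msg) : Set msg := {X | synthP H X}

inductive guardP (invKey : ℕ → ℕ) (n : ℕ) (Ks : Set ℕ) : msg → Prop
  | No_Nonce : ∀ X, msg.Nonce n ∉ parts {X} → guardP invKey n Ks X
  | Guard : ∀ K X, invKey K ∈ Ks → guardP invKey n Ks (msg.Crypt K X)
  | Cry : ∀ K X, guardP invKey n Ks X → guardP invKey n Ks (msg.Crypt K X)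
  | Pr : ∀ X Y, guardP invKey n Ks X → guardP invKey n Ks Y →
      guardP invKey n Ks (msg.MPair X Y)

/-- `guard n Ks`: messages in which `Nonce n` is guarded by the keys of `Ks`. -/
def guardMsg (invKey : ℕ → ℕ) (n : ℕ) (Ks : Set ℕ) : Set msg := {X | guardP invKey n Ks X}

/-- `Guard n Ks H`: every message of `H` lies in `guard n Ks`. -/
def Guard (invKey : ℕ → ℕ) (n : ℕ) (Ks : Set ℕ) (H : Set msg) : Prop :=
  ∀ X ∈ H, X ∈ guardMsg invKey n Ks
inductive event : Type
  | Says : agent → agent → msg → event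
deriving DecidableEq

def msgOf : event → msg
  | event.Says _ _ X => X

/-- Set of messages sent in a trace. -/
def sent (evs : List event) : Set msg :=
  {X | ∃ A B, event.Says A B X ∈ evs}
/-- Private key of an agent: the inverse of its public key. -/
def priK (invKey : ℕ → ℕ) (pubK : agent → ℕ) (A : agent) : ℕ := invKey (pubK A)

/-- Initial knowledge of each agent in a public-key infrastructure:
every agent knows its own private key and all public keys; the spy moreover
knows the private keys of the bad agents. -/
def initStatePK (invKey : ℕ → ℕ) (pubK : agent → ℕ) (bad : Set agent) : agent → Set msg :=
  fun A =>
    match A with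
    | agent.Spy =>
        {X | ∃ B ∈ bad, X = msg.Key (priK invKey pubK B)} ∪ {X | ∃ B, X = msg.Key (pubK B)}
    | _ => {msg.Key (priK invKey pubK A)} ∪ {X | ∃ B, X = msg.Key (pubK B)}

/-- `spies evs`: the private keys of the bad agents, all public keys, and
every message sent in `evs`. -/
def spiesPK (invKey : ℕ → ℕ) (pubK : agent → ℕ) (bad : Set agent) (evs : List event) :
    Set msg :=
  initStatePK invKey pubK bad agent.Spy ∪ sent evs

/-- `used evs`: parts of all agents' initial knowledge and of all messages sent in `evs`. -/
def usedPK (invKey : ℕ → ℕ) (pubK : agent → ℕ) (bad : Set agent) (evs : List event) :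
    Set msg :=
  parts ((⋃ A, initStatePK invKey pubK bad A) ∪ sent evs)
/-- The Needham–Schroeder–Lowe protocol. -/
inductive nsl (invKey : ℕ → ℕ) (pubK : agent → ℕ) (bad : Set agent) : List event → Prop
  | Nil : nsl invKey pubK bad []
  | Fake : ∀ evs B X, nsl invKey pubK bad evs →
      X ∈ synth (analz invKey (spiesPK invKey pubK bad evs)) →
      nsl invKey pubK bad (event.Says agent.Spy B X :: evs)
  | NS1 : ∀ evs A B NA, nsl invKey pubK bad evs →
      msg.Nonce NA ∉ usedPK invKey pubK bad evs →
      nsl invKey pubK bad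
        (event.Says A B (msg.Crypt (pubK B) (msg.MPair (msg.Nonce NA) (msg.Agent A))) :: evs)
  | NS2 : ∀ evs A A' B NA NB, nsl invKey pubK bad evs →
      msg.Nonce NB ∉ usedPK invKey pubK bad evs →
      event.Says A' B (msg.Crypt (pubK B) (msg.MPair (msg.Nonce NA) (msg.Agent A))) ∈ evs →
      nsl invKey pubK bad
        (event.Says B A (msg.Crypt (pubK A)
          (msg.MPair (msg.Nonce NA) (msg.MPair (msg.Nonce NB) (msg.Agent B)))) :: evs)
  | NS3 : ∀ evs A B B' NA NB, nsl invKey pubK bad evs →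
      event.Says A B (msg.Crypt (pubK B) (msg.MPair (msg.Nonce NA) (msg.Agent A))) ∈ evs →
      event.Says B' A (msg.Crypt (pubK A)
        (msg.MPair (msg.Nonce NA) (msg.MPair (msg.Nonce NB) (msg.Agent B)))) ∈ evs →
      nsl invKey pubK bad (event.Says A B (msg.Crypt (pubK B) (msg.Nonce NB)) :: evs)

/-!
A nonce guarded by keys unknown to the spy stays guarded in everything the spy can forge, so only
messages of honest agents can break the guard. Such a message exposes `NA` only if it copies `NA`
from an earlier message. A response (NS2) copies the nonce of a request (NS1), and while `NA` is
secret it occurs in a single request, so the response is encrypted for `A`. A confirmation (NS3)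
copies the second nonce of a response, and while `NA` is secret it cannot have been generated both
for a request and for a response.
-/

open msg event

section Parts

variable {G H : Set msg} {X Y : msg} {K : ℕ}

theorem subset_parts : H ⊆ parts H := partsP.Inj

theorem parts_subset_parts (hGH : G ⊆ parts H) : parts G ⊆ parts H := by
  intro X hX
  induction hX with
  | Inj X hX => exact hGH hX
  | Fst X Y _ ih => exact .Fst X Y ih
  | Snd X Y _ ih => exact .Snd X Y ih
  | Body K X _ ih => exact .Body K X ih

theorem parts_mono (hGH : G ⊆ H) : parts G ⊆ parts H :=
  parts_subset_parts (hGH.trans subset_parts)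

theorem parts_singleton_subset (hX : X ∈ parts H) : parts {X} ⊆ parts H :=
  parts_subset_parts (Set.singleton_subset_iff.2 hX)

theorem parts_union : parts (G ∪ H) = parts G ∪ parts H := by
  refine Set.Subset.antisymm (fun X hX => ?_)
    (Set.union_subset (parts_mono Set.subset_union_left) (parts_mono Set.subset_union_right))
  induction hX with
  | Inj X hX => exact hX.imp (.Inj X) (.Inj X)
  | Fst X Y _ ih => exact ih.imp (.Fst X Y) (.Fst X Y)
  | Snd X Y _ ih => exact ih.imp (.Snd X Y) (.Snd X Y)
  | Body K X _ ih => exact ih.imp (.Body K X) (.Body K X)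

@[simp]
theorem parts_insert : parts (insert X H) = parts {X} ∪ parts H := by
  rw [Set.insert_eq, parts_union]

theorem parts_eq_self (hpair : ∀ X Y, MPair X Y ∉ H) (hcrypt : ∀ K X, Crypt K X ∉ H) :
    parts H = H := by
  refine Set.Subset.antisymm (fun X hX => ?_) subset_parts
  induction hX with
  | Inj _ hX => exact hX
  | Fst X Y _ ih => exact absurd ih (hpair X Y)
  | Snd X Y _ ih => exact absurd ih (hpair X Y)
  | Body K X _ ih => exact absurd ih (hcrypt K X)

@[simp]
theorem parts_singleton_agent (a : agent) : parts {Agent a} = {Agent a} :=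
  parts_eq_self (by simp) (by simp)

@[simp]
theorem parts_singleton_number (n : ℕ) : parts {Number n} = {Number n} :=
  parts_eq_self (by simp) (by simp)

@[simp]
theorem parts_singleton_nonce (n : ℕ) : parts {Nonce n} = {Nonce n} :=
  parts_eq_self (by simp) (by simp)

@[simp]
theorem parts_singleton_hash (X : msg) : parts {Hash X} = {Hash X} :=
  parts_eq_self (by simp) (by simp)

@[simp]
theorem parts_singleton_mpair :
    parts {MPair X Y} = insert (MPair X Y) (parts {X} ∪ parts {Y}) := by
  have hpair : MPair X Y ∈ parts {MPair X Y} := subset_parts rfl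
  refine Set.Subset.antisymm (fun Z hZ => ?_) (Set.insert_subset hpair (Set.union_subset
    (parts_singleton_subset (.Fst X Y hpair)) (parts_singleton_subset (.Snd X Y hpair))))
  induction hZ with
  | Inj Z hZ => exact .inl hZ
  | Fst Z W _ ih =>
    rcases ih with ih | ih
    · cases ih
      exact .inr (.inl (subset_parts rfl))
    · exact .inr (ih.imp (.Fst Z W) (.Fst Z W))
  | Snd Z W _ ih =>
    rcases ih with ih | ih
    · cases ih
      exact .inr (.inr (subset_parts rfl))
    · exact .inr (ih.imp (.Snd Z W) (.Snd Z W))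
  | Body K Z _ ih =>
    rcases ih with ih | ih
    · cases ih
    · exact .inr (ih.imp (.Body K Z) (.Body K Z))

@[simp]
theorem parts_singleton_crypt : parts {Crypt K X} = insert (Crypt K X) (parts {X}) := by
  have hcrypt : Crypt K X ∈ parts {Crypt K X} := subset_parts rfl
  refine Set.Subset.antisymm (fun Z hZ => ?_)
    (Set.insert_subset hcrypt (parts_singleton_subset (.Body K X hcrypt)))
  induction hZ with
  | Inj Z hZ => exact .inl hZ
  | Fst Z W _ ih =>
    rcases ih with ih | ih
    · cases ih
    · exact .inr (.Fst Z W ih)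
  | Snd Z W _ ih =>
    rcases ih with ih | ih
    · cases ih
    · exact .inr (.Snd Z W ih)
  | Body K Z _ ih =>
    rcases ih with ih | ih
    · cases ih
      exact .inr (subset_parts rfl)
    · exact .inr (.Body K Z ih)

theorem ns1_mem_parts_insert_ns1 {K' n n' : ℕ} {a a' : agent} :
    Crypt K (MPair (Nonce n) (Agent a)) ∈
        parts (insert (Crypt K' (MPair (Nonce n') (Agent a'))) H) ↔
      (K = K' ∧ n = n' ∧ a = a') ∨ Crypt K (MPair (Nonce n) (Agent a)) ∈ parts H := by
  simp

end Parts

section AnalzSynth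

variable {invKey : ℕ → ℕ} {G H : Set msg} {X Y : msg} {K n : ℕ}

theorem subset_analz : H ⊆ analz invKey H := analzP.Inj

theorem analz_subset_parts : analz invKey H ⊆ parts H := by
  intro X hX
  induction hX with
  | Inj X hX => exact .Inj X hX
  | Fst X Y _ ih => exact .Fst X Y ih
  | Snd X Y _ ih => exact .Snd X Y ih
  | Decrypt K X _ _ ih _ => exact .Body K X ih

theorem analz_mono (hGH : G ⊆ H) : analz invKey G ⊆ analz invKey H := by
  intro X hX
  induction hX with
  | Inj X hX => exact .Inj X (hGH hX)
  | Fst X Y _ ih => exact .Fst X Y ih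
  | Snd X Y _ ih => exact .Snd X Y ih
  | Decrypt K X _ _ ih ihK => exact .Decrypt K X ih ihK

theorem notMem_analz_of_insert (h : Y ∉ analz invKey (insert X H)) : Y ∉ analz invKey H :=
  fun hY => h (analz_mono (Set.subset_insert X H) hY)

theorem parts_analz : parts (analz invKey H) = parts H :=
  Set.Subset.antisymm (parts_subset_parts analz_subset_parts) (parts_mono subset_analz)

theorem nonce_mem_of_mem_synth (h : Nonce n ∈ synth H) : Nonce n ∈ H := by
  cases h with
  | Inj _ h => exact h

theorem key_mem_of_mem_synth (h : Key K ∈ synth H) : Key K ∈ H := by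
  cases h with
  | Inj _ h => exact h

theorem crypt_mem_synth (h : Crypt K X ∈ synth H) : Crypt K X ∈ H ∨ X ∈ synth H := by
  cases h with
  | Inj _ h => exact .inl h
  | Cry _ _ h _ => exact .inr h

theorem mpair_mem_synth_analz (h : MPair X Y ∈ synth (analz invKey H)) :
    X ∈ synth (analz invKey H) ∧ Y ∈ synth (analz invKey H) := by
  cases h with
  | Inj _ h => exact ⟨.Inj X (.Fst X Y h), .Inj Y (.Snd X Y h)⟩
  | Pr _ _ hX hY => exact ⟨hX, hY⟩

theorem parts_synth_subset : parts (synth H) ⊆ parts H ∪ synth H := by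
  intro X hX
  induction hX with
  | Inj X hX => exact .inr hX
  | Fst X Y _ ih =>
    rcases ih with ih | ih
    · exact .inl (.Fst X Y ih)
    · cases ih with
      | Inj _ h => exact .inl (.Fst X Y (.Inj _ h))
      | Pr _ _ hX _ => exact .inr hX
  | Snd X Y _ ih =>
    rcases ih with ih | ih
    · exact .inl (.Snd X Y ih)
    · cases ih with
      | Inj _ h => exact .inl (.Snd X Y (.Inj _ h))
      | Pr _ _ _ hY => exact .inr hY
  | Body K X _ ih =>
    rcases ih with ih | ih
    · exact .inl (.Body K X ih)
    · exact (crypt_mem_synth ih).imp_left fun h => .Body K X (.Inj _ h)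

theorem parts_insert_subset_of_mem_synth_analz (hX : X ∈ synth (analz invKey H)) :
    parts (insert X H) ⊆ parts H ∪ synth (analz invKey H) := by
  have hforged : parts {X} ⊆ parts H ∪ synth (analz invKey H) :=
    calc parts {X} ⊆ parts (synth (analz invKey H)) :=
          parts_mono (Set.singleton_subset_iff.2 hX)
      _ ⊆ parts (analz invKey H) ∪ synth (analz invKey H) := parts_synth_subset
      _ = parts H ∪ synth (analz invKey H) := by rw [parts_analz]
  rw [parts_insert]
  exact Set.union_subset hforged Set.subset_union_left

theorem key_mem_parts_of_mem_parts_insert (hX : X ∈ synth (analz invKey H))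
    (h : Key K ∈ parts (insert X H)) : Key K ∈ parts H :=
  (parts_insert_subset_of_mem_synth_analz hX h).elim id
    fun h => analz_subset_parts (key_mem_of_mem_synth h)

theorem crypt_mem_parts_of_mem_parts_insert (hX : X ∈ synth (analz invKey H))
    (h : Crypt K Y ∈ parts (insert X H)) : Crypt K Y ∈ parts H ∨ Y ∈ synth (analz invKey H) :=
  (parts_insert_subset_of_mem_synth_analz hX h).elim .inl
    fun h => (crypt_mem_synth h).imp_left fun h => analz_subset_parts h

theorem crypt_mpair_nonce_mem_parts_of_mem_parts_insert (hX : X ∈ synth (analz invKey H))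
    (hn : Nonce n ∉ analz invKey H) (h : Crypt K (MPair (Nonce n) Y) ∈ parts (insert X H)) :
    Crypt K (MPair (Nonce n) Y) ∈ parts H :=
  (crypt_mem_parts_of_mem_parts_insert hX h).resolve_right fun h =>
    hn (nonce_mem_of_mem_synth (mpair_mem_synth_analz h).1)

end AnalzSynth

section Guard

variable {invKey : ℕ → ℕ} {n : ℕ} {Ks : Set ℕ} {H : Set msg} {X Y : msg} {K : ℕ}

theorem agent_mem_guardMsg (a : agent) : Agent a ∈ guardMsg invKey n Ks :=
  .No_Nonce _ (by simp)

theorem nonce_mem_guardMsg {m : ℕ} : Nonce m ∈ guardMsg invKey n Ks ↔ n ≠ m := by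
  refine ⟨?_, fun h => .No_Nonce _ (by simpa using h)⟩
  rintro ⟨_, h⟩
  simpa using h

theorem mpair_mem_guardMsg :
    MPair X Y ∈ guardMsg invKey n Ks ↔ X ∈ guardMsg invKey n Ks ∧ Y ∈ guardMsg invKey n Ks := by
  refine ⟨fun h => ?_, fun h => .Pr X Y h.1 h.2⟩
  cases h with
  | No_Nonce _ h =>
    have h : Nonce n ∉ parts {X} ∧ Nonce n ∉ parts {Y} := by simpa using h
    exact ⟨.No_Nonce X h.1, .No_Nonce Y h.2⟩
  | Pr _ _ hX hY => exact ⟨hX, hY⟩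

theorem crypt_mem_guardMsg :
    Crypt K X ∈ guardMsg invKey n Ks ↔ invKey K ∈ Ks ∨ X ∈ guardMsg invKey n Ks := by
  refine ⟨fun h => ?_, fun h => h.elim (.Guard K X) (.Cry K X)⟩
  cases h with
  | No_Nonce _ h => exact .inr (.No_Nonce X (by simpa using h))
  | Guard _ _ h => exact .inl h
  | Cry _ _ h => exact .inr h

namespace Guard

theorem of_nonce_notMem_parts (h : Nonce n ∉ parts H) : Guard invKey n Ks H :=
  fun X hX => .No_Nonce X fun hn => h (parts_singleton_subset (subset_parts hX) hn)

protected theorem insert (hX : X ∈ guardMsg invKey n Ks) (hH : Guard invKey n Ks H) :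
    Guard invKey n Ks (insert X H) :=
  Set.forall_mem_insert.2 ⟨hX, hH⟩

protected theorem analz (hH : Guard invKey n Ks H) (hKs : ∀ K ∈ Ks, Key K ∉ analz invKey H) :
    Guard invKey n Ks (analz invKey H) := by
  intro X hX
  induction hX with
  | Inj X hX => exact hH X hX
  | Fst X Y _ ih => exact (mpair_mem_guardMsg.1 ih).1
  | Snd X Y _ ih => exact (mpair_mem_guardMsg.1 ih).2
  | Decrypt K X _ hK ih _ => exact (crypt_mem_guardMsg.1 ih).resolve_left fun h => hKs _ h hK

protected theorem synth (hH : Guard invKey n Ks H) : Guard invKey n Ks (synth H) := by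
  intro X hX
  induction hX with
  | Inj X hX => exact hH X hX
  | Ag a => exact agent_mem_guardMsg a
  | Num m => exact .No_Nonce _ (by simp)
  | Hsh X _ _ => exact .No_Nonce _ (by simp)
  | Pr X Y _ _ ihX ihY => exact .Pr X Y ihX ihY
  | Cry K X _ _ ih => exact .Cry K X ih

theorem nonce_notMem (hH : Guard invKey n Ks H) : Nonce n ∉ H :=
  fun h => nonce_mem_guardMsg.1 (hH _ h) rfl

end Guard

end Guard

section Traces

variable {invKey : ℕ → ℕ} {pubK : agent → ℕ} {bad : Set agent} {evs : List event}
  {A B : agent} {X : msg}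

@[simp]
theorem spiesPK_cons :
    spiesPK invKey pubK bad (Says A B X :: evs) = insert X (spiesPK invKey pubK bad evs) := by
  have hsent : sent (Says A B X :: evs) = insert X (sent evs) := by
    ext Y
    simp [sent, exists_or]
  rw [spiesPK, hsent, Set.union_insert, spiesPK]

theorem spiesPK_nil : spiesPK invKey pubK bad [] = initStatePK invKey pubK bad agent.Spy := by
  simp [spiesPK, sent]

theorem parts_initStatePK_spy :
    parts (initStatePK invKey pubK bad agent.Spy) = initStatePK invKey pubK bad agent.Spy :=
  parts_eq_self (by simp [initStatePK]) (by simp [initStatePK])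

theorem key_priK_notMem_initStatePK_spy (hpri : Function.Injective (priK invKey pubK))
    (hpubpri : ∀ A B : agent, pubK A ≠ priK invKey pubK B) (hA : A ∉ bad) :
    Key (priK invKey pubK A) ∉ initStatePK invKey pubK bad agent.Spy := by
  rintro (⟨B, hB, hAB⟩ | ⟨B, hAB⟩)
  · exact hA (hpri (Key.inj hAB) ▸ hB)
  · exact hpubpri B A (Key.inj hAB).symm

theorem crypt_notMem_parts_spiesPK_nil {K : ℕ} :
    Crypt K X ∉ parts (spiesPK invKey pubK bad []) := by
  rw [spiesPK_nil, parts_initStatePK_spy]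
  simp [initStatePK]

theorem mem_parts_spiesPK (h : Says A B X ∈ evs) : X ∈ parts (spiesPK invKey pubK bad evs) :=
  subset_parts (.inr ⟨A, B, h⟩)

theorem parts_spiesPK_subset_usedPK :
    parts (spiesPK invKey pubK bad evs) ⊆ usedPK invKey pubK bad evs :=
  parts_mono (Set.union_subset_union_left _ (Set.subset_iUnion _ agent.Spy))

theorem ne_of_nonce_notMem_usedPK {K N N' : ℕ} {Y : msg}
    (h : Crypt K (MPair (Nonce N) Y) ∈ parts (spiesPK invKey pubK bad evs))
    (hfresh : Nonce N' ∉ usedPK invKey pubK bad evs) : N ≠ N' := by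
  rintro rfl
  exact hfresh (parts_spiesPK_subset_usedPK (.Fst _ _ (.Body _ _ h)))

end Traces

namespace nsl

variable {invKey : ℕ → ℕ} {pubK : agent → ℕ} {bad : Set agent} {evs : List event}
  {C C' : agent} {X Z : msg} {K K' N : ℕ}

theorem key_mem_initStatePK_spy (hevs : nsl invKey pubK bad evs)
    (hK : Key K ∈ parts (spiesPK invKey pubK bad evs)) :
    Key K ∈ initStatePK invKey pubK bad agent.Spy := by
  induction hevs with
  | Nil => rwa [spiesPK_nil, parts_initStatePK_spy] at hK
  | Fake evs B X _ hX ih =>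
    rw [spiesPK_cons] at hK
    exact ih (key_mem_parts_of_mem_parts_insert hX hK)
  | NS1 _ _ _ _ _ _ ih => exact ih (by simpa using hK)
  | NS2 _ _ _ _ _ _ _ _ _ ih => exact ih (by simpa using hK)
  | NS3 _ _ _ _ _ _ _ _ _ ih => exact ih (by simpa using hK)

theorem guard_analz_spiesPK {Ks : Set ℕ} (hevs : nsl invKey pubK bad evs)
    (hKs : ∀ K ∈ Ks, Key K ∉ initStatePK invKey pubK bad agent.Spy)
    (hG : Guard invKey N Ks (spiesPK invKey pubK bad evs)) :
    Guard invKey N Ks (analz invKey (spiesPK invKey pubK bad evs)) :=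
  hG.analz fun K hK h => hKs K hK (hevs.key_mem_initStatePK_spy (analz_subset_parts h))

theorem ns1_unique (hevs : nsl invKey pubK bad evs)
    (hN : Nonce N ∉ analz invKey (spiesPK invKey pubK bad evs))
    (h : Crypt K (MPair (Nonce N) (Agent C)) ∈ parts (spiesPK invKey pubK bad evs))
    (h' : Crypt K' (MPair (Nonce N) (Agent C')) ∈ parts (spiesPK invKey pubK bad evs)) :
    K = K' ∧ C = C' := by
  induction hevs with
  | Nil => exact absurd h crypt_notMem_parts_spiesPK_nil
  | Fake evs B X _ hX ih =>
    rw [spiesPK_cons] at hN h h'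
    have hN := notMem_analz_of_insert hN
    exact ih hN (crypt_mpair_nonce_mem_parts_of_mem_parts_insert hX hN h)
      (crypt_mpair_nonce_mem_parts_of_mem_parts_insert hX hN h')
  | NS1 evs A B NA _ hfresh ih =>
    rw [spiesPK_cons] at hN h h'
    rcases ns1_mem_parts_insert_ns1.1 h with ⟨rfl, rfl, rfl⟩ | hold <;>
      rcases ns1_mem_parts_insert_ns1.1 h' with ⟨rfl, hNA, rfl⟩ | hold'
    · exact ⟨rfl, rfl⟩
    · exact absurd rfl (ne_of_nonce_notMem_usedPK hold' hfresh)
    · exact absurd hNA (ne_of_nonce_notMem_usedPK hold hfresh)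
    · exact ih (notMem_analz_of_insert hN) hold hold'
  | NS2 _ _ _ _ _ _ _ _ _ ih =>
    rw [spiesPK_cons] at hN
    exact ih (notMem_analz_of_insert hN) (by simpa using h) (by simpa using h')
  | NS3 _ _ _ _ _ _ _ _ _ ih =>
    rw [spiesPK_cons] at hN
    exact ih (notMem_analz_of_insert hN) (by simpa using h) (by simpa using h')

theorem ns2_notMem_parts_of_ns1_mem_parts (hevs : nsl invKey pubK bad evs)
    (hN : Nonce N ∉ analz invKey (spiesPK invKey pubK bad evs))
    (h : Crypt K (MPair (Nonce N) (Agent C)) ∈ parts (spiesPK invKey pubK bad evs)) :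
    Crypt K' (MPair X (MPair (Nonce N) Z)) ∉ parts (spiesPK invKey pubK bad evs) := by
  intro h'
  induction hevs with
  | Nil => exact absurd h crypt_notMem_parts_spiesPK_nil
  | Fake evs B X _ hX ih =>
    rw [spiesPK_cons] at hN h h'
    have hN := notMem_analz_of_insert hN
    refine ih hN (crypt_mpair_nonce_mem_parts_of_mem_parts_insert hX hN h)
      ((crypt_mem_parts_of_mem_parts_insert hX h').resolve_right fun h' => ?_)
    exact hN (nonce_mem_of_mem_synth (mpair_mem_synth_analz (mpair_mem_synth_analz h').2).1)
  | NS1 evs A B NA _ hfresh ih =>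
    rw [spiesPK_cons] at hN h
    have hold' : Crypt K' (MPair X (MPair (Nonce N) Z)) ∈
        parts (spiesPK invKey pubK bad evs) := by simpa using h'
    rcases ns1_mem_parts_insert_ns1.1 h with ⟨-, rfl, -⟩ | hold
    · exact hfresh (parts_spiesPK_subset_usedPK (.Fst _ _ (.Snd _ _ (.Body _ _ hold'))))
    · exact ih (notMem_analz_of_insert hN) hold hold'
  | NS2 evs A _ B NA NB _ hfresh _ ih =>
    rw [spiesPK_cons] at hN
    have hold : Crypt K (MPair (Nonce N) (Agent C)) ∈ parts (spiesPK invKey pubK bad evs) := by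
      simpa using h
    have hNB : N ≠ NB := ne_of_nonce_notMem_usedPK hold hfresh
    exact ih (notMem_analz_of_insert hN) hold (by simpa [hNB] using h')
  | NS3 _ _ _ _ _ _ _ _ _ ih =>
    rw [spiesPK_cons] at hN
    exact ih (notMem_analz_of_insert hN) (by simpa using h) (by simpa using h')

theorem ns2_mem_guardMsg {Ks : Set ℕ} {N' NB : ℕ} {D : agent} (hevs : nsl invKey pubK bad evs)
    (hN : Nonce N ∉ analz invKey (spiesPK invKey pubK bad evs))
    (hfresh : Nonce NB ∉ usedPK invKey pubK bad evs)
    (h : Crypt K (MPair (Nonce N) (Agent C)) ∈ parts (spiesPK invKey pubK bad evs))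
    (h' : Crypt K' (MPair (Nonce N') (Agent C')) ∈ parts (spiesPK invKey pubK bad evs))
    (hC : priK invKey pubK C ∈ Ks) :
    Crypt (pubK C') (MPair (Nonce N') (MPair (Nonce NB) (Agent D))) ∈ guardMsg invKey N Ks := by
  by_cases hN' : N = N'
  · subst hN'
    obtain ⟨-, rfl⟩ := hevs.ns1_unique hN h h'
    exact .Guard _ _ hC
  · have hNB : N ≠ NB := ne_of_nonce_notMem_usedPK h hfresh
    exact .Cry _ _ (.Pr _ _ (nonce_mem_guardMsg.2 hN')
      (.Pr _ _ (nonce_mem_guardMsg.2 hNB) (agent_mem_guardMsg D)))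

end nsl

theorem Guard_NA_general {invKey : ℕ → ℕ} {pubK : agent → ℕ} {bad : Set agent}
    {evs : List event} {A B : agent} {NA : ℕ} (hevs : nsl invKey pubK bad evs)
    (hAspy : A ≠ agent.Spy)
    (hA : Key (priK invKey pubK A) ∉ initStatePK invKey pubK bad agent.Spy)
    (hB : Key (priK invKey pubK B) ∉ initStatePK invKey pubK bad agent.Spy)
    (hsays : Says A B (Crypt (pubK B) (MPair (Nonce NA) (Agent A))) ∈ evs) :
    Guard invKey NA {priK invKey pubK A, priK invKey pubK B} (spiesPK invKey pubK bad evs) := by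
  have hkeys : ∀ K ∈ ({priK invKey pubK A, priK invKey pubK B} : Set ℕ),
      Key K ∉ initStatePK invKey pubK bad agent.Spy := by simp [hA, hB]
  induction hevs with
  | Nil => cases hsays
  | Fake evs C X hevs hX ih =>
    have hG := ih (by simpa [hAspy] using hsays)
    exact spiesPK_cons ▸ hG.insert ((hevs.guard_analz_spiesPK hkeys hG).synth X hX)
  | NS1 evs A₁ B₁ NA₁ _ hfresh ih =>
    rw [spiesPK_cons]
    rcases List.mem_cons.1 hsays with h | h
    · cases h
      have hNA : Nonce NA ∉ parts (spiesPK invKey pubK bad evs) :=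
        fun h => hfresh (parts_spiesPK_subset_usedPK h)
      exact (Guard.of_nonce_notMem_parts hNA).insert (.Guard _ _ (.inr rfl))
    · have hne : NA ≠ NA₁ := ne_of_nonce_notMem_usedPK (mem_parts_spiesPK h) hfresh
      exact (ih h).insert (.Cry _ _ (.Pr _ _ (nonce_mem_guardMsg.2 hne) (agent_mem_guardMsg A₁)))
  | NS2 evs A₁ A₂ B₁ NA₁ NB hevs hfresh hns1 ih =>
    have hold : Says A B (Crypt (pubK B) (MPair (Nonce NA) (Agent A))) ∈ evs := by simpa using hsays
    have hsecret := (hevs.guard_analz_spiesPK hkeys (ih hold)).nonce_notMem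
    exact spiesPK_cons ▸ (ih hold).insert (hevs.ns2_mem_guardMsg hsecret hfresh
      (mem_parts_spiesPK hold) (mem_parts_spiesPK hns1) (.inl rfl))
  | NS3 evs A₁ B₁ B₂ NA₁ NB hevs _ hns2 ih =>
    have hold : Says A B (Crypt (pubK B) (MPair (Nonce NA) (Agent A))) ∈ evs := by simpa using hsays
    have hsecret := (hevs.guard_analz_spiesPK hkeys (ih hold)).nonce_notMem
    have hne : NA ≠ NB := by
      rintro rfl
      exact hevs.ns2_notMem_parts_of_ns1_mem_parts hsecret
        (mem_parts_spiesPK hold) (mem_parts_spiesPK hns2)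
    exact spiesPK_cons ▸ (ih hold).insert (.Cry _ _ (nonce_mem_guardMsg.2 hne))

/-- `Guard_NA` for Needham–Schroeder–Lowe. -/
theorem Guard_NA
    (invKey : ℕ → ℕ) (pubK : agent → ℕ) (bad : Set agent)
    (hinv : ∀ K, invKey (invKey K) = K)
    (hpub : Function.Injective pubK)
    (hpri : Function.Injective (priK invKey pubK))
    (hpubpri : ∀ A B : agent, pubK A ≠ priK invKey pubK B)
    (hspy : agent.Spy ∈ bad)
    (evs : List event) (A B : agent) (NA : ℕ)
    (hevs : nsl invKey pubK bad evs) (hA : A ∉ bad) (hB : B ∉ bad)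
    (hsays : event.Says A B (msg.Crypt (pubK B) (msg.MPair (msg.Nonce NA) (msg.Agent A))) ∈ evs) :
    Guard invKey NA {priK invKey pubK A, priK invKey pubK B} (spiesPK invKey pubK bad evs) := by
  have hkey {C : agent} := key_priK_notMem_initStatePK_spy (A := C) (bad := bad) hpri hpubpri
  exact Guard_NA_general hevs (ne_of_mem_of_not_mem hspy hA).symm (hkey hA) (hkey hB) hsays
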